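/- The integral R_C(1, 2) = ∫_0^∞ x·cos(2πx)/(exp(2π√x) − 1) dx converges and equals (1/64)·(1/2 − 3/π + 5/π²). -/

import Mathlib

open MeasureTheory Real Set

/-!
The substitution `x = t ^ 2` turns twice the real part of the Mordell integral
`J = ∫ t ^ 3 * G t / (U t - 1)` over `(0, ∞)`, where `G z = exp (2 * π * i * z ^ 2)` and
`U z = exp (2 * π * z)`, into Ramanujan's integral. Let `P z = z ^ 2 * (z - i) ^ 2`, so that
`P z - P (z + i) = -4 * i * z ^ 3`, and `f = P * G / (U - 1)`, which has no poles in the strip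
`0 ≤ im z ≤ 1`. Since `U` has period `i` and `G z = G (z + i) * U z ^ 2`, the difference
`f z - f (z + i)` is the Mordell integrand, up to the factor `-4 * i`, plus the values of the
entire functions `P * G` and `P * G * U` at `z + i`.

By Cauchy's theorem the integral of `f z - f (z + i)` over `(0, ∞)` is an integral of `f` over the
segment from `0` to `i`. There the reflection `z ↦ i - z` makes `f + P * G + P * G * U / 2` odd, so
`f` may again be replaced by entire functions. Since `P * G * U` is a quartic times a Gaussian
centred at `i / 2`, everything reduces to moments of `G` along contours that go up the imaginary
axis and then right, where `G` decays. These follow recursively from the Gaussian integral, whose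
value for the purely oscillating `G` is a limit from convergent Gaussians.
-/

open Filter Asymptotics in
lemma integrableOn_Ioi_of_isBigO_exp_neg {E : Type*} [NormedAddCommGroup E] {g : ℝ → E} {a c : ℝ}
    (hc : 0 < c) (hg : ContinuousOn g (Ici a)) (ho : g =O[atTop] fun x => Real.exp (-c * x)) :
    IntegrableOn g (Ioi a) :=
  (integrableOn_Ici_iff_integrableOn_Ioi (by finiteness)).mp <|
    (hg.locallyIntegrableOn measurableSet_Ici).integrableOn_of_isBigO_atTop ho
      ⟨Ioi a, Ioi_mem_atTop a, exp_neg_integrableOn_Ioi a hc⟩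

open Filter Topology in
lemma continuousAt_sq_sub_div_of_hasDerivAt {𝕜 : Type*} [NontriviallyNormedField 𝕜] {g : 𝕜 → 𝕜}
    {g' a : 𝕜} (hg : HasDerivAt g g' a) (hg' : g' ≠ 0) (ha : g a = 0) :
    ContinuousAt (fun z => (z - a) ^ 2 / g z) a := by
  have hslope : Tendsto (fun z => (z - a) * (slope g a z)⁻¹) (𝓝[≠] a) (𝓝 0) := by
    have hsub : Tendsto (fun z => z - a) (𝓝[≠] a) (𝓝 (a - a)) :=
      (continuous_sub_right a).continuousAt.mono_left nhdsWithin_le_nhds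
    simpa using hsub.mul ((hasDerivAt_iff_tendsto_slope.mp hg).inv₀ hg')
  rw [continuousAt_iff_punctured_nhds, sub_self, zero_pow two_ne_zero, zero_div]
  refine hslope.congr fun z => ?_
  rw [slope_def_field, ha, sub_zero, inv_div, ← mul_div_assoc, sq]

section Symmetry

variable {E : Type*} [NormedAddCommGroup E] [NormedSpace ℝ E] {g : ℝ → E} {a b : ℝ}

lemma intervalIntegral_eq_zero_of_antisymm (hg : ∀ x ∈ uIcc a b, g (a + b - x) = -g x) :
    ∫ x in a..b, g x = 0 := by
  have hreflect : ∫ x in a..b, g (a + b - x) = ∫ x in a..b, g x := by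
    rw [intervalIntegral.integral_comp_sub_left, add_sub_cancel_right, add_sub_cancel_left]
  rw [intervalIntegral.integral_congr hg, intervalIntegral.integral_neg] at hreflect
  have : IsAddTorsionFree E := .of_isTorsionFree ℝ E
  exact self_eq_neg.mp hreflect.symm

lemma intervalIntegral_eq_two_smul_of_symm (hInt : ∀ c d, IntervalIntegrable g volume c d)
    (hg : ∀ x, g (a + b - x) = g x) :
    ∫ x in a..b, g x = (2 : ℝ) • ∫ x in (a + b) / 2..b, g x := by
  have hleft : ∫ x in a..(a + b) / 2, g x = ∫ x in (a + b) / 2..b, g x := by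
    rw [← intervalIntegral.integral_congr fun x _ => hg x, intervalIntegral.integral_comp_sub_left]
    congr 1 <;> ring
  rw [← intervalIntegral.integral_add_adjacent_intervals (hInt a ((a + b) / 2)) (hInt _ b), hleft,
    two_smul]

lemma integrableOn_Ioi_zero_comp_sq_iff :
    IntegrableOn (fun t => (2 * t) • g (t ^ 2)) (Ioi 0) ↔ IntegrableOn g (Ioi 0) := by
  rw [← integrableOn_Ioi_comp_rpow_iff g two_ne_zero]
  norm_num

lemma integral_Ioi_zero_comp_sq :
    ∫ t in Ioi (0 : ℝ), (2 * t) • g (t ^ 2) = ∫ x in Ioi 0, g x := by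
  rw [← integral_comp_rpow_Ioi_of_pos (g := g) two_pos]
  norm_num

end Symmetry

section Hook

open Filter Topology
open Complex (I)

variable {f g F : ℂ → ℂ} {a b : ℝ}

/-- Integrability along the contour that runs from `a * I` up to `b * I` and then to the right,
towards `+∞ + b * I`. -/
structure HookIntegrable (f : ℂ → ℂ) (a b : ℝ) : Prop where
  vertical : IntervalIntegrable (fun y : ℝ => f (y * I)) volume a b
  horizontal : IntegrableOn (fun t : ℝ => f (t + b * I)) (Ioi 0)

/-- The integral along the contour that runs from `a * I` up to `b * I` and then to the right,
towards `+∞ + b * I`. -/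
noncomputable def hookIntegral (f : ℂ → ℂ) (a b : ℝ) : ℂ :=
  I * (∫ y in a..b, f (y * I)) + ∫ t in Ioi (0 : ℝ), f (t + b * I)

lemma HookIntegrable.add (hf : HookIntegrable f a b) (hg : HookIntegrable g a b) :
    HookIntegrable (fun z => f z + g z) a b :=
  ⟨hf.vertical.add hg.vertical, hf.horizontal.add hg.horizontal⟩

lemma HookIntegrable.const_mul (hf : HookIntegrable f a b) (c : ℂ) :
    HookIntegrable (fun z => c * f z) a b :=
  ⟨hf.vertical.const_mul c, hf.horizontal.const_mul c⟩

lemma HookIntegrable.comp_sub {c : ℝ} (hf : HookIntegrable f (a - c) (b - c)) :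
    HookIntegrable (fun z => f (z - c * I)) a b where
  vertical := by simpa [sub_mul] using hf.vertical.comp_sub_right c
  horizontal := by simpa [sub_mul, add_sub_assoc] using hf.horizontal

lemma hookIntegral_add (hf : HookIntegrable f a b) (hg : HookIntegrable g a b) :
    hookIntegral (fun z => f z + g z) a b = hookIntegral f a b + hookIntegral g a b := by
  simp only [hookIntegral]
  rw [intervalIntegral.integral_add hf.vertical hg.vertical,
    integral_add hf.horizontal hg.horizontal]
  ring

lemma hookIntegral_const_mul (c : ℂ) (f : ℂ → ℂ) (a b : ℝ) :
    hookIntegral (fun z => c * f z) a b = c * hookIntegral f a b := by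
  simp only [hookIntegral, intervalIntegral.integral_const_mul, integral_const_mul]
  ring

lemma hookIntegral_comp_sub (f : ℂ → ℂ) (a b c : ℝ) :
    hookIntegral (fun z => f (z - c * I)) a b = hookIntegral f (a - c) (b - c) := by
  have hvertical : ∫ y in a..b, f (y * I - c * I) = ∫ y in (a - c)..(b - c), f (y * I) := by
    simpa [sub_mul] using
      intervalIntegral.integral_comp_sub_right (a := a) (b := b) (fun y : ℝ => f (y * I)) c
  simp only [hookIntegral, hvertical, Complex.ofReal_sub, sub_mul, add_sub_assoc]

lemma hookIntegral_eq_neg_of_hasDerivAt (hF : ∀ z, HasDerivAt F (f z) z)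
    (hf : HookIntegrable f a b) (hlim : Tendsto (fun t : ℝ => F (t + b * I)) atTop (𝓝 0)) :
    hookIntegral f a b = -F (a * I) := by
  have hvertical : ∫ y in a..b, f (y * I) * I = F (b * I) - F (a * I) := by
    refine intervalIntegral.integral_eq_sub_of_hasDerivAt (f := fun y : ℝ => F (y * I))
      (fun y _ => ?_) (hf.vertical.mul_const I)
    simpa [Function.comp_def] using (hF (y * I)).comp y ((hasDerivAt_id y).ofReal_comp.mul_const I)
  have hhorizontal : ∫ t in Ioi (0 : ℝ), f (t + b * I) = 0 - F ((0 : ℝ) + b * I) := by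
    refine integral_Ioi_of_hasDerivAt_of_tendsto' (f := fun t : ℝ => F (t + b * I))
      (fun t _ => ?_) hf.horizontal hlim
    simpa [Function.comp_def] using
      (hF (t + b * I)).comp t ((hasDerivAt_id t).ofReal_comp.add_const (b * I))
  rw [intervalIntegral.integral_mul_const] at hvertical
  rw [hookIntegral, mul_comm, hvertical, hhorizontal, Complex.ofReal_zero, zero_add]
  ring

lemma integral_Ioi_eq_hookIntegral {r : ℝ → ℝ} (hab : a ≤ b)
    (hcont : ContinuousOn f (Ici 0 ×ℂ Icc a b)) (hdiff : DifferentiableOn ℂ f (Ioi 0 ×ℂ Ioo a b))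
    (hbottom : IntegrableOn (fun t : ℝ => f (t + a * I)) (Ioi 0))
    (htop : IntegrableOn (fun t : ℝ => f (t + b * I)) (Ioi 0)) (hr : Tendsto r atTop (𝓝 0))
    (hbound : ∀ᶠ R : ℝ in atTop, ∀ y ∈ Icc a b, ‖f (R + y * I)‖ ≤ r R) :
    ∫ t in Ioi (0 : ℝ), f (t + a * I) = hookIntegral f a b := by
  have hright : Tendsto (fun R : ℝ => ∫ y in a..b, f (R + y * I)) atTop (𝓝 0) := by
    refine squeeze_zero_norm' ?_ (by simpa using hr.mul_const |b - a|)
    filter_upwards [hbound] with R hR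
    refine intervalIntegral.norm_integral_le_of_norm_le_const fun y hy => hR y ?_
    exact Ioc_subset_Icc_self (uIoc_of_le hab ▸ hy)
  have hrect : ∀ᶠ R : ℝ in atTop,
      (∫ t in (0 : ℝ)..R, f (t + a * I)) - (∫ t in (0 : ℝ)..R, f (t + b * I)) +
        I * (∫ y in a..b, f (R + y * I)) = I * ∫ y in a..b, f (y * I) := by
    filter_upwards [eventually_ge_atTop 0] with R hR
    have hgoursat := Complex.integral_boundary_rect_eq_zero_of_continuousOn_of_differentiableOn f
      (a * I) (R + b * I)
      (hcont.mono <| Complex.reProdIm_subset_iff.mpr <| prod_mono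
        (by simpa [uIcc_of_le hR] using Icc_subset_Ici_self) (by simp [uIcc_of_le hab]))
      (hdiff.mono <| Complex.reProdIm_subset_iff.mpr <| prod_mono
        (by simpa [hR] using Ioo_subset_Ioi_self) (by simp [hab]))
    simpa [sub_eq_zero] using hgoursat
  have hlim := ((intervalIntegral_tendsto_integral_Ioi 0 hbottom tendsto_id).sub
    (intervalIntegral_tendsto_integral_Ioi 0 htop tendsto_id)).add (hright.const_mul I)
  have hsides := tendsto_nhds_unique (tendsto_const_nhds.congr' (hrect.mono fun _ h => h.symm)) hlim
  rw [hookIntegral, hsides]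
  ring

end Hook

section Gaussian

open Filter Topology Asymptotics
open Complex (I)

variable {b : ℂ} {Y : ℝ}

lemma hasDerivAt_cexp_neg_mul_sq (b z : ℂ) :
    HasDerivAt (fun z => Complex.exp (-b * z ^ 2)) (-(2 * b * z) * Complex.exp (-b * z ^ 2)) z := by
  refine ((hasDerivAt_pow 2 z).const_mul (-b)).cexp.congr_deriv ?_
  push_cast
  ring

lemma isBigO_pow_mul_gaussian_horizontal (hre : 0 ≤ b.re) (him : b.im < 0) (hY : 0 < Y) (k : ℕ) :
    (fun t : ℝ => (t + Y * I) ^ k * Complex.exp (-b * (t + Y * I) ^ 2)) =O[atTop]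
      fun t => Real.exp (-(-b.im * Y) * t) := by
  have hlinear : (fun t : ℝ => (t : ℂ) + Y * I) =O[atTop] fun t => t :=
    (Complex.isTheta_ofReal _ _).isBigO.add <|
      (isLittleO_const_id_atTop (Y * I : ℂ)).isBigO
  have hpow : (fun t : ℝ => (t + Y * I) ^ k) =O[atTop] fun t => Real.exp (-b.im * Y * t) :=
    (hlinear.pow k).trans (isLittleO_pow_exp_pos_mul_atTop k (by nlinarith)).isBigO
  have hgauss : (fun t : ℝ => Complex.exp (-b * (t + Y * I) ^ 2)) =O[atTop]
      fun t => Real.exp (2 * b.im * Y * t) := by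
    refine IsBigO.of_bound (Real.exp (b.re * Y ^ 2)) (Eventually.of_forall fun t => ?_)
    rw [GaussianFourier.norm_cexp_neg_mul_sq_add_mul_I, Real.norm_eq_abs, Real.abs_exp,
      ← Real.exp_add, Real.exp_le_exp]
    linarith [mul_nonneg hre (sq_nonneg t)]
  refine (hpow.mul hgauss).congr_right fun t => ?_
  rw [← Real.exp_add]
  ring_nf

lemma hookIntegrable_pow_mul_gaussian (hre : 0 ≤ b.re) (him : b.im < 0) (hY : 0 < Y) (k : ℕ) :
    HookIntegrable (fun z => z ^ k * Complex.exp (-b * z ^ 2)) 0 Y where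
  vertical := Continuous.intervalIntegrable (by fun_prop) _ _
  horizontal := integrableOn_Ioi_of_isBigO_exp_neg (by nlinarith)
    (Continuous.continuousOn (by fun_prop)) (isBigO_pow_mul_gaussian_horizontal hre him hY k)

lemma tendsto_pow_mul_gaussian_horizontal (hre : 0 ≤ b.re) (him : b.im < 0) (hY : 0 < Y) (k : ℕ) :
    Tendsto (fun t : ℝ => (t + Y * I) ^ k * Complex.exp (-b * (t + Y * I) ^ 2)) atTop (𝓝 0) := by
  refine (isBigO_pow_mul_gaussian_horizontal hre him hY k).trans_tendsto ?_
  exact Real.tendsto_exp_atBot.comp (tendsto_id.const_mul_atTop_of_neg (by nlinarith))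

lemma hookIntegral_gaussian_of_re_pos (hre : 0 < b.re) (him : b.im ≤ 0) (hY : 0 ≤ Y) :
    hookIntegral (fun z => Complex.exp (-b * z ^ 2)) 0 Y = (π / b) ^ (1 / 2 : ℂ) / 2 := by
  have hr : Tendsto (fun R : ℝ => Real.exp (b.re * Y ^ 2 - b.re * R ^ 2)) atTop (𝓝 0) := by
    refine Real.tendsto_exp_atBot.comp (tendsto_const_nhds.add_atBot ?_)
    exact tendsto_neg_atBot_iff.mpr ((tendsto_pow_atTop two_ne_zero).const_mul_atTop hre)
  have hbound : ∀ᶠ R : ℝ in atTop, ∀ y ∈ Icc 0 Y,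
      ‖Complex.exp (-b * (R + y * I) ^ 2)‖ ≤ Real.exp (b.re * Y ^ 2 - b.re * R ^ 2) := by
    filter_upwards [eventually_ge_atTop 0] with R hR y hy
    rw [GaussianFourier.norm_cexp_neg_mul_sq_add_mul_I, Real.exp_le_exp]
    have hsq : b.re * y ^ 2 ≤ b.re * Y ^ 2 := by gcongr; exacts [hy.1, hy.2]
    nlinarith [mul_nonneg hy.1 hR]
  have hcauchy := integral_Ioi_eq_hookIntegral (f := fun z => Complex.exp (-b * z ^ 2)) hY
    (Continuous.continuousOn (by fun_prop)) (Differentiable.differentiableOn (by fun_prop))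
    (GaussianFourier.integrable_cexp_neg_mul_sq_add_real_mul_I hre 0).integrableOn
    (GaussianFourier.integrable_cexp_neg_mul_sq_add_real_mul_I hre Y).integrableOn hr hbound
  rw [← integral_gaussian_complex_Ioi hre]
  simpa using hcauchy.symm

lemma tendsto_hookIntegral_gaussian_add_ofReal (hre : 0 ≤ b.re) (him : b.im < 0) (hY : 0 < Y) :
    Tendsto (fun ε : ℝ => hookIntegral (fun z => Complex.exp (-(b + ε) * z ^ 2)) 0 Y) (𝓝[>] 0)
      (𝓝 (hookIntegral (fun z => Complex.exp (-b * z ^ 2)) 0 Y)) := by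
  have hvertical : Tendsto
      (fun ε : ℝ => ∫ y in (0 : ℝ)..Y, Complex.exp (-(b + ε) * (y * I) ^ 2)) (𝓝[>] 0)
      (𝓝 (∫ y in (0 : ℝ)..Y, Complex.exp (-b * (y * I) ^ 2))) := by
    have hcont := intervalIntegral.continuous_parametric_intervalIntegral_of_continuous'
      (μ := volume) (f := fun ε y : ℝ => Complex.exp (-(b + ε) * (y * I) ^ 2))
      (by simp only [Function.uncurry_def]; fun_prop) 0 Y
    simpa using (hcont.tendsto 0).mono_left nhdsWithin_le_nhds
  have hhorizontal : Tendsto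
      (fun ε : ℝ => ∫ t in Ioi (0 : ℝ), Complex.exp (-(b + ε) * (t + Y * I) ^ 2)) (𝓝[>] 0)
      (𝓝 (∫ t in Ioi (0 : ℝ), Complex.exp (-b * (t + Y * I) ^ 2))) := by
    refine tendsto_integral_filter_of_dominated_convergence
      (fun t => Real.exp (Y ^ 2) * ‖Complex.exp (-b * (t + Y * I) ^ 2)‖)
      (Eventually.of_forall fun ε => Continuous.aestronglyMeasurable (by fun_prop)) ?_
      (by simpa using
        (hookIntegrable_pow_mul_gaussian hre him hY 0).horizontal.norm.const_mul (Real.exp (Y ^ 2)))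
      (Eventually.of_forall fun t => ?_)
    · filter_upwards [Ioo_mem_nhdsGT one_pos] with ε hε
      refine Eventually.of_forall fun t => ?_
      simp only [GaussianFourier.norm_cexp_neg_mul_sq_add_mul_I, Complex.add_re, Complex.add_im,
        Complex.ofReal_re, Complex.ofReal_im, ← Real.exp_add, Real.exp_le_exp]
      nlinarith [mul_nonneg hε.1.le (sq_nonneg t), mul_le_mul_of_nonneg_right hε.2.le (sq_nonneg Y)]
    · have hcont : Continuous fun ε : ℝ => Complex.exp (-(b + ε) * (t + Y * I) ^ 2) := by fun_prop
      simpa using (hcont.tendsto 0).mono_left nhdsWithin_le_nhds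
  exact (hvertical.const_mul I).add hhorizontal

lemma hookIntegral_gaussian (hre : 0 ≤ b.re) (him : b.im < 0) (hY : 0 < Y) :
    hookIntegral (fun z => Complex.exp (-b * z ^ 2)) 0 Y = (π / b) ^ (1 / 2 : ℂ) / 2 := by
  have hb : b ≠ 0 := fun h => by simp [h] at him
  have hslit : π / b ∈ Complex.slitPlane := by
    refine Or.inr (ne_of_gt ?_)
    rw [Complex.div_im, Complex.ofReal_im, Complex.ofReal_re, zero_mul, zero_div, zero_sub, neg_pos]
    exact div_neg_of_neg_of_pos (by nlinarith [Real.pi_pos]) (Complex.normSq_pos.mpr hb)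
  have hclosed : ContinuousAt (fun ε : ℝ => (π / (b + ε)) ^ (1 / 2 : ℂ) / 2) 0 := by
    refine ContinuousAt.div_const (ContinuousAt.cpow ?_ continuousAt_const (by simpa using hslit)) _
    exact continuousAt_const.div (by fun_prop) (by simpa using hb)
  refine tendsto_nhds_unique (tendsto_hookIntegral_gaussian_add_ofReal hre him hY) ?_
  have hlim : Tendsto (fun ε : ℝ => (π / (b + ε)) ^ (1 / 2 : ℂ) / 2) (𝓝[>] 0)
      (𝓝 ((π / b) ^ (1 / 2 : ℂ) / 2)) := by
    simpa using hclosed.tendsto.mono_left nhdsWithin_le_nhds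
  refine hlim.congr' ?_
  filter_upwards [self_mem_nhdsWithin] with ε hε
  refine (hookIntegral_gaussian_of_re_pos ?_ ?_ hY.le).symm
  · simpa using add_pos_of_nonneg_of_pos hre hε
  · simpa using him.le

lemma hookIntegral_mul_gaussian (hre : 0 ≤ b.re) (him : b.im < 0) (hY : 0 < Y) :
    hookIntegral (fun z => z * Complex.exp (-b * z ^ 2)) 0 Y = 1 / (2 * b) := by
  have hb : b ≠ 0 := fun h => by simp [h] at him
  have hInt := hookIntegrable_pow_mul_gaussian hre him hY 1
  have hderiv := hookIntegral_eq_neg_of_hasDerivAt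
    (fun z => (hasDerivAt_cexp_neg_mul_sq b z).congr_deriv
      (show _ = -(2 * b) * (z ^ 1 * Complex.exp (-b * z ^ 2)) by ring))
    (hInt.const_mul _) (by simpa using tendsto_pow_mul_gaussian_horizontal hre him hY 0)
  rw [hookIntegral_const_mul] at hderiv
  simp only [pow_one, Complex.ofReal_zero, zero_mul, ne_eq, OfNat.ofNat_ne_zero, not_false_eq_true,
    zero_pow, mul_zero, Complex.exp_zero] at hderiv
  rw [eq_div_iff (by simp [hb])]
  linear_combination -hderiv

lemma hookIntegral_pow_add_two_mul_gaussian (hre : 0 ≤ b.re) (him : b.im < 0) (hY : 0 < Y) (k : ℕ) :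
    hookIntegral (fun z => z ^ (k + 2) * Complex.exp (-b * z ^ 2)) 0 Y =
      (k + 1) / (2 * b) * hookIntegral (fun z => z ^ k * Complex.exp (-b * z ^ 2)) 0 Y := by
  have hb : b ≠ 0 := fun h => by simp [h] at him
  have hInt := hookIntegrable_pow_mul_gaussian hre him hY
  have hderiv := hookIntegral_eq_neg_of_hasDerivAt
    (fun z => ((hasDerivAt_pow (k + 1) z).mul (hasDerivAt_cexp_neg_mul_sq b z)).congr_deriv
      (show _ = (k + 1) * (z ^ k * Complex.exp (-b * z ^ 2)) +
          -(2 * b) * (z ^ (k + 2) * Complex.exp (-b * z ^ 2)) by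
        push_cast [Nat.add_sub_cancel]; ring))
    (((hInt k).const_mul _).add ((hInt (k + 2)).const_mul _))
    (tendsto_pow_mul_gaussian_horizontal hre him hY (k + 1))
  rw [hookIntegral_add ((hInt k).const_mul _) ((hInt (k + 2)).const_mul _),
    hookIntegral_const_mul, hookIntegral_const_mul] at hderiv
  simp only [Pi.mul_apply, Complex.ofReal_zero, zero_mul, ne_eq, Nat.add_eq_zero_iff, one_ne_zero,
    and_false, not_false_eq_true, zero_pow, neg_zero] at hderiv
  rw [div_mul_eq_mul_div, eq_div_iff (by simp [hb])]
  linear_combination -hderiv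

lemma hookIntegrable_quartic_mul_gaussian (hre : 0 ≤ b.re) (him : b.im < 0) (hY : 0 < Y)
    (c₀ c₁ c₂ c₃ c₄ : ℂ) :
    HookIntegrable (fun z => (c₀ + c₁ * z + c₂ * z ^ 2 + c₃ * z ^ 3 + c₄ * z ^ 4) *
      Complex.exp (-b * z ^ 2)) 0 Y := by
  have hInt := fun k c => (hookIntegrable_pow_mul_gaussian hre him hY k).const_mul c
  convert ((((hInt 0 c₀).add (hInt 1 c₁)).add (hInt 2 c₂)).add (hInt 3 c₃)).add (hInt 4 c₄) using 2
  ring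

lemma hookIntegral_quartic_mul_gaussian (hre : 0 ≤ b.re) (him : b.im < 0) (hY : 0 < Y)
    (c₀ c₁ c₂ c₃ c₄ : ℂ) :
    hookIntegral (fun z => (c₀ + c₁ * z + c₂ * z ^ 2 + c₃ * z ^ 3 + c₄ * z ^ 4) *
        Complex.exp (-b * z ^ 2)) 0 Y =
      (c₀ + c₂ / (2 * b) + 3 * c₄ / (2 * b) ^ 2) * ((π / b) ^ (1 / 2 : ℂ) / 2) +
        (c₁ / (2 * b) + 2 * c₃ / (2 * b) ^ 2) := by
  have hInt := fun k c => (hookIntegrable_pow_mul_gaussian hre him hY k).const_mul c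
  have hsum : (fun z => (c₀ + c₁ * z + c₂ * z ^ 2 + c₃ * z ^ 3 + c₄ * z ^ 4) *
      Complex.exp (-b * z ^ 2)) = fun z => c₀ * (z ^ 0 * Complex.exp (-b * z ^ 2)) +
        c₁ * (z ^ 1 * Complex.exp (-b * z ^ 2)) + c₂ * (z ^ 2 * Complex.exp (-b * z ^ 2)) +
        c₃ * (z ^ 3 * Complex.exp (-b * z ^ 2)) + c₄ * (z ^ 4 * Complex.exp (-b * z ^ 2)) := by
    ext z
    ring
  have hmoment := hookIntegral_pow_add_two_mul_gaussian hre him hY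
  rw [hsum, hookIntegral_add ((((hInt 0 c₀).add (hInt 1 c₁)).add (hInt 2 c₂)).add (hInt 3 c₃))
      (hInt 4 c₄), hookIntegral_add (((hInt 0 c₀).add (hInt 1 c₁)).add (hInt 2 c₂)) (hInt 3 c₃),
    hookIntegral_add ((hInt 0 c₀).add (hInt 1 c₁)) (hInt 2 c₂),
    hookIntegral_add (hInt 0 c₀) (hInt 1 c₁)]
  simp only [hookIntegral_const_mul, hmoment 2, hmoment 1, hmoment 0, pow_zero, one_mul, pow_one,
    hookIntegral_gaussian hre him hY, hookIntegral_mul_gaussian hre him hY]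
  push_cast
  ring

end Gaussian

section Mordell

open Filter Topology
open Complex (I)

variable {Y : ℝ} {z : ℂ}

/-- The phase `exp (2 * π * i * z ^ 2)`; the real part of its restriction to the real axis is
`cos (2 * π * t ^ 2)`. -/
noncomputable def quadPhase (z : ℂ) : ℂ := Complex.exp (2 * π * I * z ^ 2)

/-- The `i`-periodic exponential `exp (2 * π * z)`. -/
noncomputable def expTwoPi (z : ℂ) : ℂ := Complex.exp (2 * π * z)

/-- The quartic `B₄ (-i * z) - B₄ 0`, where `B₄` is the Bernoulli polynomial: its difference under
the shift by `i` is a multiple of `z ^ 3`, and it vanishes doubly at `0` and `i`. -/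
noncomputable def bernoulliQuartic (z : ℂ) : ℂ := z ^ 2 * (z - I) ^ 2

/-- The function whose contour integral along the boundary of the strip `0 ≤ im z ≤ 1` evaluates
the Mordell integral of `t ^ 3 * quadPhase t / (expTwoPi t - 1)`. The apparent poles at `0` and `I`
are removable, and division by zero gives it the limiting value `0` there. -/
noncomputable def mordellKernel (z : ℂ) : ℂ :=
  bernoulliQuartic z * quadPhase z / (expTwoPi z - 1)

@[fun_prop] lemma differentiable_quadPhase : Differentiable ℂ quadPhase := by
  unfold quadPhase; fun_prop

@[fun_prop] lemma differentiable_expTwoPi : Differentiable ℂ expTwoPi := by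
  unfold expTwoPi; fun_prop

@[fun_prop] lemma differentiable_bernoulliQuartic : Differentiable ℂ bernoulliQuartic := by
  unfold bernoulliQuartic; fun_prop

@[fun_prop] lemma continuous_quadPhase : Continuous quadPhase := differentiable_quadPhase.continuous

@[fun_prop] lemma continuous_expTwoPi : Continuous expTwoPi := differentiable_expTwoPi.continuous

@[fun_prop] lemma continuous_bernoulliQuartic : Continuous bernoulliQuartic :=
  differentiable_bernoulliQuartic.continuous

lemma norm_quadPhase (x y : ℝ) : ‖quadPhase (x + y * I)‖ = Real.exp (-(4 * π * x * y)) := by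
  have hre : (2 * π * I * (x + y * I) ^ 2).re = -(4 * π * x * y) := by
    have hsplit : 2 * π * I * (x + y * I) ^ 2 =
        (-(4 * π * x * y) : ℝ) + (2 * π * (x ^ 2 - y ^ 2) : ℝ) * I := by
      push_cast
      linear_combination (4 * π * x * y + 2 * π * y ^ 2 * I) * Complex.I_sq
    rw [hsplit, Complex.add_re, Complex.ofReal_re, Complex.re_ofReal_mul, Complex.I_re, mul_zero,
      add_zero]
  rw [quadPhase, Complex.norm_exp, hre]

lemma norm_expTwoPi (z : ℂ) : ‖expTwoPi z‖ = Real.exp (2 * π * z.re) := by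
  simp [expTwoPi, Complex.norm_exp]

lemma expTwoPi_add_I (z : ℂ) : expTwoPi (z + I) = expTwoPi z := by
  rw [expTwoPi, mul_add, Complex.exp_add, Complex.exp_two_pi_mul_I, mul_one, expTwoPi]

lemma expTwoPi_I_sub (z : ℂ) : expTwoPi (I - z) = (expTwoPi z)⁻¹ := by
  rw [expTwoPi, mul_sub, Complex.exp_sub, Complex.exp_two_pi_mul_I, one_div, expTwoPi]

lemma quadPhase_sub_I (z : ℂ) : quadPhase (z - I) = quadPhase z * expTwoPi z ^ 2 := by
  rw [quadPhase, quadPhase, expTwoPi, ← Complex.exp_nat_mul, ← Complex.exp_add,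
    Complex.exp_eq_exp_iff_exists_int]
  refine ⟨-1, ?_⟩
  push_cast
  linear_combination 2 * π * (I - 2 * z) * Complex.I_sq

lemma quadPhase_I_sub (z : ℂ) : quadPhase (I - z) = quadPhase z * expTwoPi z ^ 2 := by
  rw [← quadPhase_sub_I, quadPhase, quadPhase, sub_sq_comm]

lemma quadPhase_mul_expTwoPi (z : ℂ) :
    quadPhase z * expTwoPi z = I * quadPhase (z - I / 2) := by
  rw [quadPhase, quadPhase, expTwoPi, ← Complex.exp_add]
  calc Complex.exp (2 * π * I * z ^ 2 + 2 * π * z)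
    _ = Complex.exp (π / 2 * I + 2 * π * I * (z - I / 2) ^ 2) := by
      congr 1
      linear_combination (2 * π * z - π * I / 2) * Complex.I_sq
    _ = I * Complex.exp (2 * π * I * (z - I / 2) ^ 2) := by
      rw [Complex.exp_add, Complex.exp_pi_div_two_mul_I]

lemma bernoulliQuartic_sub_add_I (z : ℂ) :
    bernoulliQuartic z - bernoulliQuartic (z + I) = -4 * I * z ^ 3 := by
  simp only [bernoulliQuartic]
  ring

lemma bernoulliQuartic_I_sub (z : ℂ) : bernoulliQuartic (I - z) = bernoulliQuartic z := by
  simp only [bernoulliQuartic]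
  ring

lemma bernoulliQuartic_eq_sq (z : ℂ) : bernoulliQuartic z = ((z - I / 2) ^ 2 + 1 / 4) ^ 2 := by
  have hfactor : (z - I / 2) ^ 2 + 1 / 4 = z * (z - I) := by
    linear_combination Complex.I_sq / 4
  rw [hfactor, mul_pow, bernoulliQuartic]

lemma expTwoPi_eq_one_iff : expTwoPi z = 1 ↔ ∃ n : ℤ, z = n * I := by
  rw [expTwoPi, Complex.exp_eq_one_iff]
  refine exists_congr fun n => ?_
  rw [show n * (2 * π * I) = 2 * π * (n * I) by ring, mul_right_inj' (by simp [Real.pi_ne_zero])]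

lemma eq_zero_or_eq_I_of_expTwoPi_eq_one (h : expTwoPi z = 1) (hz : z.im ∈ Icc 0 1) :
    z = 0 ∨ z = I := by
  obtain ⟨n, rfl⟩ := expTwoPi_eq_one_iff.mp h
  have hn : (0 : ℝ) ≤ n ∧ (n : ℝ) ≤ 1 := by simpa using hz
  norm_cast at hn
  obtain rfl | rfl : n = 0 ∨ n = 1 := by omega
  · simp
  · simp

lemma expTwoPi_ne_one_of_re_pos (hz : 0 < z.re) : expTwoPi z ≠ 1 := by
  intro h
  obtain ⟨n, rfl⟩ := expTwoPi_eq_one_iff.mp h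
  simp at hz

lemma mordellKernel_sub_add_I (h : expTwoPi z ≠ 1) :
    mordellKernel z - mordellKernel (z + I) =
      -4 * I * (z ^ 3 * quadPhase z / (expTwoPi z - 1)) +
        (bernoulliQuartic (z + I) * quadPhase (z + I) +
          bernoulliQuartic (z + I) * (quadPhase (z + I) * expTwoPi (z + I))) := by
  have hphase : quadPhase z = quadPhase (z + I) * expTwoPi z ^ 2 := by
    simpa [expTwoPi_add_I] using quadPhase_sub_I (z + I)
  have hne := sub_ne_zero.mpr h
  rw [mordellKernel, mordellKernel, expTwoPi_add_I, hphase]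
  field_simp
  linear_combination quadPhase (z + I) * expTwoPi z ^ 2 * bernoulliQuartic_sub_add_I z

lemma mordellKernel_add_I_sub (hz : z.im ∈ Icc 0 1) :
    mordellKernel z + mordellKernel (I - z) =
      -(bernoulliQuartic z * quadPhase z + bernoulliQuartic (I - z) * quadPhase (I - z) +
        bernoulliQuartic z * (quadPhase z * expTwoPi z)) := by
  rw [mordellKernel, mordellKernel, bernoulliQuartic_I_sub, quadPhase_I_sub, expTwoPi_I_sub]
  by_cases h : expTwoPi z = 1
  · have hzero : bernoulliQuartic z = 0 := by
      rcases eq_zero_or_eq_I_of_expTwoPi_eq_one h hz with rfl | rfl <;> simp [bernoulliQuartic]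
    simp [hzero]
  · have hU : expTwoPi z ≠ 0 := Complex.exp_ne_zero _
    have hne := sub_ne_zero.mpr h
    have hinv : (expTwoPi z)⁻¹ - 1 = -(expTwoPi z - 1) / expTwoPi z := by
      rw [neg_sub, sub_div, div_self hU, one_div]
    rw [hinv]
    field_simp
    ring

lemma bernoulliQuartic_mul_quadPhase_mul_expTwoPi_I_sub (z : ℂ) :
    bernoulliQuartic (I - z) * (quadPhase (I - z) * expTwoPi (I - z)) =
      bernoulliQuartic z * (quadPhase z * expTwoPi z) := by
  have hU : expTwoPi z ≠ 0 := Complex.exp_ne_zero _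
  rw [bernoulliQuartic_I_sub, quadPhase_I_sub, expTwoPi_I_sub]
  field_simp

lemma continuousAt_mordellKernel (hz : z.im ∈ Icc 0 1) : ContinuousAt mordellKernel z := by
  by_cases h : expTwoPi z = 1
  · have hderiv : HasDerivAt (fun w => expTwoPi w - 1) (2 * π) z := by
      refine (((hasDerivAt_id z).const_mul (2 * π : ℂ)).cexp.sub_const 1).congr_deriv ?_
      simpa [expTwoPi] using h
    have hquot := continuousAt_sq_sub_div_of_hasDerivAt hderiv (by simp [Real.pi_ne_zero])
      (sub_eq_zero.mpr h)
    rcases eq_zero_or_eq_I_of_expTwoPi_eq_one h hz with rfl | rfl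
    · refine (hquot.mul (g := fun w => (w - I) ^ 2 * quadPhase w) (by fun_prop)).congr ?_
      exact .of_forall fun w => by
        simp only [Pi.mul_apply, mordellKernel, bernoulliQuartic]
        ring
    · refine (hquot.mul (g := fun w => w ^ 2 * quadPhase w) (by fun_prop)).congr ?_
      exact .of_forall fun w => by
        simp only [Pi.mul_apply, mordellKernel, bernoulliQuartic]
        ring
  · exact ContinuousAt.div (by fun_prop) (by fun_prop) (sub_ne_zero.mpr h)

lemma differentiableAt_mordellKernel (h : expTwoPi z ≠ 1) : DifferentiableAt ℂ mordellKernel z :=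
  DifferentiableAt.div (by fun_prop) (by fun_prop) (sub_ne_zero.mpr h)

lemma norm_bernoulliQuartic_le {x y : ℝ} (hx : 0 ≤ x) (hy : y ∈ Icc 0 1) :
    ‖bernoulliQuartic (x + y * I)‖ ≤ 24 * Real.exp (x + 1) := by
  have hz : ‖x + y * I‖ ≤ x + 1 := by
    refine (norm_add_le _ _).trans ?_
    simpa [abs_of_nonneg (hx), abs_of_nonneg hy.1] using hy.2
  have hzI : ‖x + y * I - I‖ ≤ x + 1 := by
    have hsplit : x + y * I - I = x - ((1 - y : ℝ) : ℂ) * I := by push_cast; ring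
    rw [hsplit]
    refine (norm_sub_le _ _).trans ?_
    simpa [abs_of_nonneg (hx), abs_of_nonneg (sub_nonneg.mpr hy.2),
      -Complex.ofReal_sub] using hy.1
  have hexp : (x + 1) ^ 4 / 24 ≤ Real.exp (x + 1) :=
    Real.pow_div_factorial_le_exp (x + 1) (by linarith) 4
  calc ‖bernoulliQuartic (x + y * I)‖
    _ = ‖x + y * I‖ ^ 2 * ‖x + y * I - I‖ ^ 2 := by
      rw [bernoulliQuartic, norm_mul, norm_pow, norm_pow]
    _ ≤ (x + 1) ^ 2 * (x + 1) ^ 2 := by gcongr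
    _ ≤ 24 * Real.exp (x + 1) := by linarith

lemma norm_mordellKernel_le {x y : ℝ} (hx : 1 ≤ x) (hy : y ∈ Icc 0 1) :
    ‖mordellKernel (x + y * I)‖ ≤ 48 * Real.exp 1 * Real.exp (-x) := by
  have hquartic := norm_bernoulliQuartic_le (zero_le_one.trans hx) hy
  have hphase : ‖quadPhase (x + y * I)‖ ≤ 1 := by
    rw [norm_quadPhase, Real.exp_le_one_iff, neg_nonpos]
    have := hy.1
    positivity
  have hdenom : Real.exp (2 * x) / 2 ≤ ‖expTwoPi (x + y * I) - 1‖ := by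
    have htri := norm_sub_norm_le (expTwoPi (x + y * I)) 1
    rw [norm_expTwoPi, norm_one] at htri
    have hlarge : 2 * x + 1 ≤ Real.exp (2 * x) := Real.add_one_le_exp _
    have hmono : Real.exp (2 * x) ≤ Real.exp (2 * π * (x + y * I).re) := by
      have hre : (x + y * I).re = x := by simp
      rw [hre, Real.exp_le_exp]
      nlinarith [Real.pi_gt_three]
    linarith
  calc ‖mordellKernel (x + y * I)‖
    _ = ‖bernoulliQuartic (x + y * I)‖ * ‖quadPhase (x + y * I)‖ / ‖expTwoPi (x + y * I) - 1‖ := by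
      rw [mordellKernel, norm_div, norm_mul]
    _ ≤ 24 * Real.exp (x + 1) * 1 / (Real.exp (2 * x) / 2) := by gcongr
    _ = 48 * Real.exp 1 * Real.exp (-x) := by
      rw [show (2 : ℝ) * x = x + x by ring, Real.exp_add, Real.exp_add, Real.exp_neg]
      field_simp
      norm_num

lemma integrableOn_mordellKernel_horizontal {y : ℝ} (hy : y ∈ Icc 0 1) :
    IntegrableOn (fun t : ℝ => mordellKernel (t + y * I)) (Ioi 0) := by
  refine integrableOn_Ioi_of_isBigO_exp_neg one_pos (fun t _ => ?_)
    (.of_bound (48 * Real.exp 1) ?_)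
  · refine ContinuousAt.continuousWithinAt ?_
    exact ContinuousAt.comp (continuousAt_mordellKernel (by simpa using hy))
      (f := fun t : ℝ => (t : ℂ) + y * I) (by fun_prop)
  · filter_upwards [eventually_ge_atTop 1] with t ht
    simpa using norm_mordellKernel_le ht hy

lemma integral_mordellKernel_eq_hookIntegral :
    ∫ t in Ioi (0 : ℝ), mordellKernel t = hookIntegral mordellKernel 0 1 := by
  have hdecay : Tendsto (fun R => 48 * Real.exp 1 * Real.exp (-R)) atTop (𝓝 0) := by
    simpa using Real.tendsto_exp_neg_atTop_nhds_zero.const_mul (48 * Real.exp 1)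
  have hcauchy := integral_Ioi_eq_hookIntegral zero_le_one
    (fun z hz => (continuousAt_mordellKernel hz.2).continuousWithinAt)
    (fun z hz => (differentiableAt_mordellKernel
      (expTwoPi_ne_one_of_re_pos hz.1)).differentiableWithinAt)
    (integrableOn_mordellKernel_horizontal (left_mem_Icc.mpr zero_le_one))
    (integrableOn_mordellKernel_horizontal (right_mem_Icc.mpr zero_le_one)) hdecay
    ((eventually_ge_atTop 1).mono fun R hR y hy => norm_mordellKernel_le hR hy)
  simpa using hcauchy

lemma integral_mordellKernel_vertical :
    ∫ y in (0 : ℝ)..1, mordellKernel (y * I) =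
      -((∫ y in (0 : ℝ)..1, bernoulliQuartic (y * I) * quadPhase (y * I)) +
        ∫ y in (1 / 2 : ℝ)..1,
          bernoulliQuartic (y * I) * (quadPhase (y * I) * expTwoPi (y * I))) := by
  have hreflect : ∀ y : ℝ, ((0 + 1 - y : ℝ) : ℂ) * I = I - y * I := fun y => by
    push_cast; ring
  have hkernel : IntervalIntegrable (fun y : ℝ => mordellKernel (y * I)) volume 0 1 := by
    refine ContinuousOn.intervalIntegrable fun y hy => ContinuousAt.continuousWithinAt ?_
    rw [uIcc_of_le zero_le_one] at hy
    exact ContinuousAt.comp (continuousAt_mordellKernel (by simpa using hy))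
      (f := fun y : ℝ => (y : ℂ) * I) (by fun_prop)
  have hquartic : IntervalIntegrable
      (fun y : ℝ => bernoulliQuartic (y * I) * quadPhase (y * I)) volume 0 1 :=
    Continuous.intervalIntegrable (by fun_prop) _ _
  have hproduct : ∀ c d, IntervalIntegrable
      (fun y : ℝ => bernoulliQuartic (y * I) * (quadPhase (y * I) * expTwoPi (y * I)))
      volume c d := fun c d => Continuous.intervalIntegrable (by fun_prop) _ _
  have hsymm := intervalIntegral_eq_two_smul_of_symm hproduct fun y => by
    rw [hreflect, bernoulliQuartic_mul_quadPhase_mul_expTwoPi_I_sub]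
  have hanti : ∫ y in (0 : ℝ)..1, (mordellKernel (y * I) +
      bernoulliQuartic (y * I) * quadPhase (y * I) +
      (1 / 2) * (bernoulliQuartic (y * I) * (quadPhase (y * I) * expTwoPi (y * I)))) = 0 := by
    refine intervalIntegral_eq_zero_of_antisymm fun y hy => ?_
    rw [uIcc_of_le zero_le_one] at hy
    rw [hreflect, bernoulliQuartic_mul_quadPhase_mul_expTwoPi_I_sub]
    linear_combination mordellKernel_add_I_sub (z := y * I) (by simpa using hy)
  rw [intervalIntegral.integral_add (hkernel.add hquartic) ((hproduct 0 1).const_mul _),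
    intervalIntegral.integral_add hkernel hquartic, intervalIntegral.integral_const_mul,
    hsymm] at hanti
  rw [zero_add, Complex.real_smul, Complex.ofReal_ofNat] at hanti
  linear_combination hanti

lemma pi_div_neg_two_pi_I_cpow_half : (π / -(2 * π * I)) ^ (1 / 2 : ℂ) = (1 + I) / 2 := by
  have hsq : π / -(2 * π * I) = ((1 + I) / 2) ^ 2 := by
    rw [div_eq_iff (by simp [Real.pi_ne_zero])]
    linear_combination (π / 2) * (2 + I) * Complex.I_sq
  have hre : 0 < ((1 + I) / 2).re := by norm_num
  rw [hsq, one_div, Complex.sq_cpow_two_inv hre]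

/-- The quartic with coefficients `c₀, …, c₄` times the phase `quadPhase`. -/
noncomputable def quarticPhase (c₀ c₁ c₂ c₃ c₄ z : ℂ) : ℂ :=
  (c₀ + c₁ * z + c₂ * z ^ 2 + c₃ * z ^ 3 + c₄ * z ^ 4) * quadPhase z

lemma quarticPhase_eq_quartic_mul_gaussian (c₀ c₁ c₂ c₃ c₄ : ℂ) :
    quarticPhase c₀ c₁ c₂ c₃ c₄ = fun z => (c₀ + c₁ * z + c₂ * z ^ 2 + c₃ * z ^ 3 + c₄ * z ^ 4) *
      Complex.exp (-(-(2 * π * I)) * z ^ 2) := by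
  ext z
  rw [neg_neg, quarticPhase, quadPhase]

lemma hookIntegrable_quarticPhase (hY : 0 < Y) (c₀ c₁ c₂ c₃ c₄ : ℂ) :
    HookIntegrable (quarticPhase c₀ c₁ c₂ c₃ c₄) 0 Y := by
  rw [quarticPhase_eq_quartic_mul_gaussian]
  exact hookIntegrable_quartic_mul_gaussian (by simp) (by simp [Real.pi_pos]) hY c₀ c₁ c₂ c₃ c₄

lemma hookIntegral_quarticPhase (hY : 0 < Y) (c₀ c₁ c₂ c₃ c₄ : ℂ) :
    hookIntegral (quarticPhase c₀ c₁ c₂ c₃ c₄) 0 Y =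
      (c₀ + I * c₂ / (4 * π) - 3 * c₄ / (16 * π ^ 2)) * ((1 + I) / 4) +
        (I * c₁ / (4 * π) - c₃ / (8 * π ^ 2)) := by
  have hinv : (2 * -(2 * π * I))⁻¹ = I / (4 * π) := by
    have hpi : (π : ℂ) ≠ 0 := by simp [Real.pi_ne_zero]
    refine inv_eq_of_mul_eq_one_right ?_
    field_simp
    norm_num [Complex.I_sq]
  rw [quarticPhase_eq_quartic_mul_gaussian,
    hookIntegral_quartic_mul_gaussian (by simp) (by simp [Real.pi_pos]) hY,
    pi_div_neg_two_pi_I_cpow_half]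
  simp only [div_eq_mul_inv, ← inv_pow, hinv]
  linear_combination (3 * c₄ * (1 + I) / 4 + 2 * c₃) / (16 * π ^ 2) * Complex.I_sq

lemma bernoulliQuartic_mul_quadPhase (z : ℂ) :
    bernoulliQuartic z * quadPhase z = quarticPhase 0 0 (-1) (-2 * I) 1 z := by
  rw [bernoulliQuartic, quarticPhase]
  linear_combination z ^ 2 * quadPhase z * Complex.I_sq

lemma bernoulliQuartic_mul_quadPhase_mul_expTwoPi (z : ℂ) :
    bernoulliQuartic z * (quadPhase z * expTwoPi z) =
      quarticPhase (I / 16) 0 (I / 2) 0 I (z - (1 / 2 : ℝ) * I) := by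
  have hhalf : z - (1 / 2 : ℝ) * I = z - I / 2 := by push_cast; ring
  rw [bernoulliQuartic_eq_sq, quadPhase_mul_expTwoPi, hhalf, quarticPhase]
  ring

lemma hookIntegrable_bernoulliQuartic_mul_quadPhase :
    HookIntegrable (fun z => bernoulliQuartic z * quadPhase z) 0 1 := by
  simp only [bernoulliQuartic_mul_quadPhase]
  exact hookIntegrable_quarticPhase one_pos _ _ _ _ _

lemma hookIntegrable_bernoulliQuartic_mul_quadPhase_mul_expTwoPi :
    HookIntegrable (fun z => bernoulliQuartic z * (quadPhase z * expTwoPi z)) (1 / 2) 1 := by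
  simp only [bernoulliQuartic_mul_quadPhase_mul_expTwoPi]
  refine HookIntegrable.comp_sub ?_
  rw [sub_self]
  exact hookIntegrable_quarticPhase (by norm_num) _ _ _ _ _

lemma hookIntegral_bernoulliQuartic_mul_quadPhase :
    hookIntegral (fun z => bernoulliQuartic z * quadPhase z) 0 1 =
      (-I / (4 * π) - 3 / (16 * π ^ 2)) * ((1 + I) / 4) + I / (4 * π ^ 2) := by
  simp only [bernoulliQuartic_mul_quadPhase]
  rw [hookIntegral_quarticPhase one_pos]
  ring

lemma hookIntegral_bernoulliQuartic_mul_quadPhase_mul_expTwoPi :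
    hookIntegral (fun z => bernoulliQuartic z * (quadPhase z * expTwoPi z)) (1 / 2) 1 =
      (I / 16 - 1 / (8 * π) - 3 * I / (16 * π ^ 2)) * ((1 + I) / 4) := by
  simp only [bernoulliQuartic_mul_quadPhase_mul_expTwoPi]
  rw [hookIntegral_comp_sub, sub_self, hookIntegral_quarticPhase (by norm_num)]
  linear_combination ((1 + I) / (32 * π)) * Complex.I_sq

/-- The integrand that `t ^ 3 * cos (2 * π * t ^ 2) / (exp (2 * π * t) - 1)` is the real part of. -/
noncomputable def mordellIntegrand (t : ℝ) : ℂ := t ^ 3 * quadPhase t / (expTwoPi t - 1)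

lemma re_mordellIntegrand (t : ℝ) : (mordellIntegrand t).re =
    t ^ 3 * Real.cos (2 * π * t ^ 2) / (Real.exp (2 * π * t) - 1) := by
  have hexp : expTwoPi t - 1 = (Real.exp (2 * π * t) - 1 : ℝ) := by simp [expTwoPi]
  have hphase : quadPhase t = Complex.exp ((2 * π * t ^ 2 : ℝ) * I) := by
    rw [quadPhase]
    push_cast
    ring_nf
  rw [mordellIntegrand, hexp, hphase, Complex.div_ofReal_re, ← Complex.ofReal_pow,
    Complex.re_ofReal_mul, Complex.exp_ofReal_mul_I_re]

lemma four_I_mul_mordellIntegrand {t : ℝ} (ht : 0 < t) :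
    4 * I * mordellIntegrand t =
      bernoulliQuartic (t + (1 : ℝ) * I) * quadPhase (t + (1 : ℝ) * I) +
        bernoulliQuartic (t + (1 : ℝ) * I) *
          (quadPhase (t + (1 : ℝ) * I) * expTwoPi (t + (1 : ℝ) * I)) -
        (mordellKernel t - mordellKernel (t + (1 : ℝ) * I)) := by
  rw [Complex.ofReal_one, one_mul, mordellKernel_sub_add_I (expTwoPi_ne_one_of_re_pos (by simpa)),
    mordellIntegrand]
  ring

lemma integrableOn_mordellKernel_ofReal :
    IntegrableOn (fun t : ℝ => mordellKernel t) (Ioi 0) := by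
  simpa using integrableOn_mordellKernel_horizontal (left_mem_Icc.mpr zero_le_one)

lemma integrableOn_mordellIntegrand : IntegrableOn mordellIntegrand (Ioi 0) := by
  have hI : IsUnit (4 * I) := by simp
  refine (integrable_const_mul_iff hI _).mp ?_
  refine IntegrableOn.congr_fun ?_ (fun t ht => (four_I_mul_mordellIntegrand ht).symm)
    measurableSet_Ioi
  exact (hookIntegrable_bernoulliQuartic_mul_quadPhase.horizontal.add
    hookIntegrable_bernoulliQuartic_mul_quadPhase_mul_expTwoPi.horizontal).sub
    (integrableOn_mordellKernel_ofReal.sub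
      (integrableOn_mordellKernel_horizontal (right_mem_Icc.mpr zero_le_one)))

lemma four_I_mul_integral_mordellIntegrand :
    4 * I * ∫ t in Ioi (0 : ℝ), mordellIntegrand t =
      hookIntegral (fun z => bernoulliQuartic z * quadPhase z) 0 1 +
        hookIntegral (fun z => bernoulliQuartic z * (quadPhase z * expTwoPi z)) (1 / 2) 1 := by
  have hP := hookIntegrable_bernoulliQuartic_mul_quadPhase.horizontal
  have hQ := hookIntegrable_bernoulliQuartic_mul_quadPhase_mul_expTwoPi.horizontal
  have hf := integrableOn_mordellKernel_ofReal
  have hfI := integrableOn_mordellKernel_horizontal (right_mem_Icc.mpr zero_le_one)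
  rw [← integral_const_mul, setIntegral_congr_fun measurableSet_Ioi
    fun t ht => four_I_mul_mordellIntegrand ht]
  rw [integral_sub (by exact hP.add hQ) (by exact hf.sub hfI), integral_add hP hQ,
    integral_sub hf hfI, integral_mordellKernel_eq_hookIntegral]
  simp only [hookIntegral, integral_mordellKernel_vertical]
  ring

lemma integral_mordellIntegrand :
    ∫ t in Ioi (0 : ℝ), mordellIntegrand t =
      (1 / 128 * (1 / 2 - 3 / π + 5 / π ^ 2) : ℝ) + (1 / 128 * (1 / 2 - 1 / π) : ℝ) * I := by
  have hpi : (π : ℂ) ≠ 0 := by simp [Real.pi_ne_zero]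
  refine mul_left_cancel₀ (show 4 * I ≠ 0 by simp) ?_
  rw [four_I_mul_integral_mordellIntegrand, hookIntegral_bernoulliQuartic_mul_quadPhase,
    hookIntegral_bernoulliQuartic_mul_quadPhase_mul_expTwoPi]
  push_cast
  field_simp
  ring_nf
  simp only [Complex.I_sq]
  ring

lemma integral_re_mordellIntegrand :
    ∫ t in Ioi (0 : ℝ), (mordellIntegrand t).re = 1 / 128 * (1 / 2 - 3 / π + 5 / π ^ 2) := by
  refine (integral_re integrableOn_mordellIntegrand).trans ?_
  rw [integral_mordellIntegrand, RCLike.re_eq_complex_re, Complex.add_re, Complex.ofReal_re,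
    Complex.re_ofReal_mul, Complex.I_re, mul_zero, add_zero]

end Mordell

/-- Ramanujan's integral `R_C(1, 2)` converges and equals `(1/64)(1/2 - 3/π + 5/π²)`. -/
theorem ramanujan_RC_one_two :
    IntegrableOn
      (fun x : ℝ => x * Real.cos (2 * π * x) / (Real.exp (2 * π * Real.sqrt x) - 1)) (Ioi 0) ∧
    (∫ x in Ioi (0:ℝ), x * Real.cos (2 * π * x) / (Real.exp (2 * π * Real.sqrt x) - 1)) =
      (1 / 64) * (1 / 2 - 3 / π + 5 / π ^ 2) := by
  have hsubst : EqOn (fun t : ℝ => 2 * (mordellIntegrand t).re)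
      (fun t => (2 * t) • (t ^ 2 * Real.cos (2 * π * t ^ 2) /
        (Real.exp (2 * π * Real.sqrt (t ^ 2)) - 1))) (Ioi 0) := fun t ht => by
    simp only [re_mordellIntegrand, Real.sqrt_sq (le_of_lt ht), smul_eq_mul]
    ring
  constructor
  · refine integrableOn_Ioi_zero_comp_sq_iff.mp ?_
    exact IntegrableOn.congr_fun (integrableOn_mordellIntegrand.re.const_mul 2) hsubst
      measurableSet_Ioi
  · rw [← integral_Ioi_zero_comp_sq, ← setIntegral_congr_fun measurableSet_Ioi hsubst,
      integral_const_mul, integral_re_mordellIntegrand]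
    ring
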